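/- arXiv:2110.01697 — 3 statements merged into one kernel-verified Lean document; each statement's English description precedes it below -/
import Mathlib

section
/- Let n, p, q be positive integers, A a real p×n matrix and B a real q×n matrix. At every feasible point v = (C, ζ, z, α, ξ) of the MPEC, the following finite family of vectors in ℝ^{1+2p+2q} (coordinates grouped as (C, ζ, z, α, ξ)) is positive-linearly independent: (i) for each index i with (ABᵀα+z)_i = 0, the vector (0, 0, e_i, (ABᵀ)_{i·}, 0); (ii) for each i with 1 − ζ_i = 0, the vector (0, −e_i, 0, 0, 0); (iii) for each i with (BBᵀα−1+ξ)_i = 0, the vector (0, 0, 0, (BBᵀ)_{i·}, e_i); (iv) for each i with C − α_i = 0, the vector (1, 0, 0, −e_i, 0); (v) for each i with ζ_i = 0, the vector (0, e_i, 0, 0, 0); (vi) for each i with z_i = 0, the vector (0, 0, e_i, 0, 0); (vii) for each i with α_i = 0, the vector (0, 0, 0, e_i, 0); (viii) for each i with ξ_i = 0, the vector (0, 0, 0, 0, e_i). (This is exactly the statement that the MPEC-tailored Mangasarian–Fromovitz constraint qualification holds at every feasible point of the MPEC, since the constraint functions are affine and these vectors are the gradients of the constraint components that vanish at v.) -/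
open Matrix Finset

/-!
In the components `C`, `z` and `ξ` the family has only nonnegative entries, so a nonnegative
combination can vanish there only if `lam₄`, `lam₁`, `lam₆`, `lam₃` and `lam₈` all vanish. The
matrix rows thereby drop out of the `α`-component, which becomes `lam₇ = 0`. The only possible
cancellation left is between `e_i` and `-e_i` in the `ζ`-component, and these two vectors are never
active together because `ζ i` cannot be both `0` and `1`.
-/

theorem eq_zero_and_eq_zero_of_sub_eq_zero_of_disjoint_support {ι G : Type*} [AddGroup G]
    {f g : ι → G} (hdisj : Disjoint (Function.support f) (Function.support g))
    (hsub : f - g = 0) : f = 0 ∧ g = 0 := by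
  obtain rfl : f = g := sub_eq_zero.mp hsub
  exact and_self_iff.mpr (Function.support_eq_empty_iff.mp (disjoint_self.mp hdisj))

theorem disjoint_support_of_active_bounds {ι R M : Type*} [AddGroupWithOne R] [NeZero (1 : R)]
    [Zero M] {ζ : ι → R} {lower upper : ι → M}
    (hlower : ∀ i, ζ i ≠ 0 → lower i = 0) (hupper : ∀ i, 1 - ζ i ≠ 0 → upper i = 0) :
    Disjoint (Function.support lower) (Function.support upper) := by
  refine Set.disjoint_left.mpr fun i hi_lower hi_upper => ?_
  have hζ_zero : ζ i = 0 := by_contra fun hζ => hi_lower (hlower i hζ)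
  exact hi_upper (hupper i (by simp [hζ_zero]))

theorem mpec_mfcq_holds_at_every_feasible_point_general {R ι κ : Type*}
    [NonAssocRing R] [PartialOrder R] [IsOrderedAddMonoid R] [Nontrivial R] [Fintype ι] [Fintype κ]
    (M : Matrix ι κ R) (N : Matrix κ κ R) (ζ : ι → R)
    {lam₁ lam₂ lam₅ lam₆ : ι → R} {lam₃ lam₄ lam₇ lam₈ : κ → R}
    (hl₁ : 0 ≤ lam₁) (hl₃ : 0 ≤ lam₃) (hl₄ : 0 ≤ lam₄) (hl₆ : 0 ≤ lam₆) (hl₈ : 0 ≤ lam₈)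
    (hs₂ : ∀ i, 1 - ζ i ≠ 0 → lam₂ i = 0) (hs₅ : ∀ i, ζ i ≠ 0 → lam₅ i = 0)
    (hCcomp : ∑ i, lam₄ i = 0) (hζcomp : lam₅ - lam₂ = 0) (hzcomp : lam₁ + lam₆ = 0)
    (hαcomp : lam₁ ᵥ* M + lam₃ ᵥ* N - lam₄ + lam₇ = 0) (hξcomp : lam₃ + lam₈ = 0) :
    lam₁ = 0 ∧ lam₂ = 0 ∧ lam₃ = 0 ∧ lam₄ = 0 ∧ lam₅ = 0 ∧ lam₆ = 0 ∧ lam₇ = 0 ∧ lam₈ = 0 := by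
  obtain ⟨h₁, h₆⟩ := (add_eq_zero_iff_of_nonneg hl₁ hl₆).mp hzcomp
  obtain ⟨h₃, h₈⟩ := (add_eq_zero_iff_of_nonneg hl₃ hl₈).mp hξcomp
  have h₄ : lam₄ = 0 := (Fintype.sum_eq_zero_iff_of_nonneg hl₄).mp hCcomp
  have h₇ : lam₇ = 0 := by simpa [h₁, h₃, h₄] using hαcomp
  obtain ⟨h₅, h₂⟩ := eq_zero_and_eq_zero_of_sub_eq_zero_of_disjoint_support
    (disjoint_support_of_active_bounds hs₅ hs₂) hζcomp
  exact ⟨h₁, h₂, h₃, h₄, h₅, h₆, h₇, h₈⟩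

/-- The MPEC-MFCQ holds at every feasible point of the MPEC: the family of
gradients of the active constraint components is positive-linearly independent.
The vectors live in ℝ^{1+2p+2q}, with coordinates grouped as (C, ζ, z, α, ξ);
the coefficient functions λ₁,…,λ₈ are supported on the corresponding active
index sets, and the linear combination being zero is stated componentwise. -/
theorem mpec_mfcq_holds_at_every_feasible_point
    (n p q : ℕ) (hn : 0 < n) (hp : 0 < p) (hq : 0 < q)
    (A : Matrix (Fin p) (Fin n) ℝ) (B : Matrix (Fin q) (Fin n) ℝ)
    (C : ℝ) (ζ z : Fin p → ℝ) (α ξ : Fin q → ℝ)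
    (g : Fin p → ℝ) (hg : g = (A * Bᵀ).mulVec α + z)
    (h : Fin q → ℝ) (hh : h = (B * Bᵀ).mulVec α - 1 + ξ)
    -- feasibility of v = (C, ζ, z, α, ξ) for the MPEC
    (hfeas1 : ∀ i, 0 ≤ ζ i ∧ 0 ≤ g i ∧ ζ i * g i = 0)
    (hfeas2 : ∀ i, 0 ≤ z i ∧ 0 ≤ 1 - ζ i ∧ z i * (1 - ζ i) = 0)
    (hfeas3 : ∀ i, 0 ≤ α i ∧ 0 ≤ h i ∧ α i * h i = 0)
    (hfeas4 : ∀ i, 0 ≤ ξ i ∧ 0 ≤ C - α i ∧ ξ i * (C - α i) = 0)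
    -- nonnegative coefficients of the family members
    (lam₁ lam₂ lam₅ lam₆ : Fin p → ℝ) (lam₃ lam₄ lam₇ lam₈ : Fin q → ℝ)
    (hl₁ : ∀ i, 0 ≤ lam₁ i) (hl₂ : ∀ i, 0 ≤ lam₂ i)
    (hl₃ : ∀ i, 0 ≤ lam₃ i) (hl₄ : ∀ i, 0 ≤ lam₄ i)
    (hl₅ : ∀ i, 0 ≤ lam₅ i) (hl₆ : ∀ i, 0 ≤ lam₆ i)
    (hl₇ : ∀ i, 0 ≤ lam₇ i) (hl₈ : ∀ i, 0 ≤ lam₈ i)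
    -- each coefficient is supported on the corresponding active index set:
    -- (i) (ABᵀα+z)_i = 0, (ii) 1-ζ_i = 0, (iii) (BBᵀα-1+ξ)_i = 0,
    -- (iv) C-α_i = 0, (v) ζ_i = 0, (vi) z_i = 0, (vii) α_i = 0, (viii) ξ_i = 0
    (hs₁ : ∀ i, g i ≠ 0 → lam₁ i = 0)
    (hs₂ : ∀ i, 1 - ζ i ≠ 0 → lam₂ i = 0)
    (hs₃ : ∀ i, h i ≠ 0 → lam₃ i = 0)
    (hs₄ : ∀ i, C - α i ≠ 0 → lam₄ i = 0)
    (hs₅ : ∀ i, ζ i ≠ 0 → lam₅ i = 0)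
    (hs₆ : ∀ i, z i ≠ 0 → lam₆ i = 0)
    (hs₇ : ∀ i, α i ≠ 0 → lam₇ i = 0)
    (hs₈ : ∀ i, ξ i ≠ 0 → lam₈ i = 0)
    -- the nonnegative combination of the family vectors is zero, componentwise:
    -- C-component, ζ-component, z-component, α-component, ξ-component
    (hCcomp : (∑ i, lam₄ i) = 0)
    (hζcomp : ∀ j, lam₅ j - lam₂ j = 0)
    (hzcomp : ∀ j, lam₁ j + lam₆ j = 0)
    (hαcomp : ∀ j, (∑ i, lam₁ i * (A * Bᵀ) i j) + (∑ i, lam₃ i * (B * Bᵀ) i j)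
        - lam₄ j + lam₇ j = 0)
    (hξcomp : ∀ j, lam₃ j + lam₈ j = 0) :
    (∀ i, lam₁ i = 0) ∧ (∀ i, lam₂ i = 0) ∧ (∀ i, lam₃ i = 0) ∧
    (∀ i, lam₄ i = 0) ∧ (∀ i, lam₅ i = 0) ∧ (∀ i, lam₆ i = 0) ∧
    (∀ i, lam₇ i = 0) ∧ (∀ i, lam₈ i = 0) := by
  simpa only [funext_iff, Pi.zero_apply] using
    mpec_mfcq_holds_at_every_feasible_point_general (A * Bᵀ) (B * Bᵀ) ζ hl₁ hl₃ hl₄ hl₆ hl₈ hs₂ hs₅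
      hCcomp (funext hζcomp) (funext hzcomp) (funext hαcomp) (funext hξcomp)
end

section
/- Let Q be a finite index set partitioned into pairwise disjoint subsets Λ₁, Λ₂, Λ₃⁺, Λ₃ᶜ, Λ_u whose union is Q, let n be a positive integer, let B be a real Q×n matrix, and set M = BBᵀ. Then the family of vectors in ℝ^Q × ℝ^Q consisting of (M_{i·}, e_i) for each i ∈ Λ₃⁺ ∪ Λ₃ᶜ ∪ Λ_u, (M_{i·}, e_i) for each i ∈ Λ₁, (e_i, 0) for each i ∈ Λ₁, (e_i, 0) for each i ∈ Λ₂, (0, e_i) for each i ∈ Λ₃ᶜ, and (0, e_i) for each i ∈ Λ₁ ∪ Λ₂ ∪ Λ₃⁺, is positive-linearly independent: any nonnegative coefficients ρᵍ (over Λ₃⁺ ∪ Λ₃ᶜ ∪ Λ_u), ρʰ and ρⁱ (over Λ₁), ρʲ (over Λ₂), ρᵐ (over Λ₃ᶜ) and ρⁿ (over Λ₁ ∪ Λ₂ ∪ Λ₃⁺) whose corresponding combination of these vectors is zero must all vanish. -/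
open Matrix Finset

/-- Positive-linear independence of the finite family `v i`, `i ∈ s`, with coefficients in an
ordered semiring `R`. Coefficients are functions on all of `ι`, constrained only on `s`. -/
def PosLinearIndepOn {ι : Type*} (R : Type*) {E : Type*} [Semiring R] [PartialOrder R]
    [AddCommMonoid E] [Module R E] (v : ι → E) (s : Finset ι) : Prop :=
  ∀ c : ι → R, (∀ i ∈ s, 0 ≤ c i) → ∑ i ∈ s, c i • v i = 0 → ∀ i ∈ s, c i = 0

section PosLinearIndepOn

variable {ι κ R E F : Type*} [Semiring R] [PartialOrder R]
  [AddCommMonoid E] [Module R E] [AddCommMonoid F] [Module R F]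

theorem PosLinearIndepOn.of_pos [PartialOrder E] [IsOrderedAddMonoid E] [PosSMulStrictMono R E]
    {v : ι → E} {s : Finset ι} (hv : ∀ i ∈ s, 0 < v i) : PosLinearIndepOn R v s := by
  intro c hc hsum i hi
  have hterm : c i • v i = 0 :=
    (sum_eq_zero_iff_of_nonneg fun j hj => smul_nonneg (hc j hj) (hv j hj).le).1 hsum i hi
  by_contra hci
  exact (smul_pos ((hc i hi).lt_of_ne' hci) (hv i hi)).ne' hterm

-- Block triangularity: the second coordinate only sees `w`, and once the coefficients of `w`
-- vanish, the first coordinate only sees `v`.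
theorem PosLinearIndepOn.disjSum_of_snd {w : ι → E × F} {s : Finset ι} {v : κ → E}
    {t : Finset κ} (hw : PosLinearIndepOn R (fun i => (w i).2) s) (hv : PosLinearIndepOn R v t) :
    PosLinearIndepOn R (Sum.elim w fun j => (v j, 0)) (s.disjSum t) := by
  intro c hc hsum
  simp only [sum_disjSum, Sum.elim_inl, Sum.elim_inr, Prod.ext_iff, Prod.fst_add, Prod.snd_add,
    Prod.fst_sum, Prod.snd_sum, Prod.smul_fst, Prod.smul_snd, smul_zero, sum_const_zero, add_zero,
    Prod.fst_zero, Prod.snd_zero] at hsum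
  obtain ⟨hfst, hsnd⟩ := hsum
  have hcw : ∀ i ∈ s, c (.inl i) = 0 :=
    hw _ (fun i hi => hc _ (inl_mem_disjSum.2 hi)) hsnd
  have hw_fst : ∑ i ∈ s, c (.inl i) • (w i).1 = 0 :=
    sum_eq_zero fun i hi => by rw [hcw i hi, zero_smul]
  rw [hw_fst, zero_add] at hfst
  have hcv : ∀ j ∈ t, c (.inr j) = 0 :=
    hv _ (fun j hj => hc _ (inr_mem_disjSum.2 hj)) hfst
  rintro (i | j) hmem
  · exact hcw i (inl_mem_disjSum.1 hmem)
  · exact hcv j (inr_mem_disjSum.1 hmem)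

end PosLinearIndepOn

theorem lemma3_positive_linear_independence_general
    {ι R : Type*} [DecidableEq ι] [Semiring R] [PartialOrder R] [IsStrictOrderedRing R]
    {G H I J K L : Finset ι} {M : Matrix ι ι R} {ρg ρh ρi ρj ρk ρl : ι → R}
    (hg : ∀ i ∈ G, 0 ≤ ρg i) (hh : ∀ i ∈ H, 0 ≤ ρh i) (hi : ∀ i ∈ I, 0 ≤ ρi i)
    (hj : ∀ i ∈ J, 0 ≤ ρj i) (hk : ∀ i ∈ K, 0 ≤ ρk i) (hl : ∀ i ∈ L, 0 ≤ ρl i)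
    (hsum1 : (∑ i ∈ G, ρg i • (M i : ι → R)) + (∑ i ∈ H, ρh i • (M i : ι → R))
        + (∑ i ∈ I, ρi i • (Pi.single i 1 : ι → R))
        + (∑ i ∈ J, ρj i • (Pi.single i 1 : ι → R)) = 0)
    (hsum2 : (∑ i ∈ G, ρg i • (Pi.single i 1 : ι → R))
        + (∑ i ∈ H, ρh i • (Pi.single i 1 : ι → R))
        + (∑ i ∈ K, ρk i • (Pi.single i 1 : ι → R))
        + (∑ i ∈ L, ρl i • (Pi.single i 1 : ι → R)) = 0) :
    (∀ i ∈ G, ρg i = 0) ∧ (∀ i ∈ H, ρh i = 0) ∧ (∀ i ∈ I, ρi i = 0) ∧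
    (∀ i ∈ J, ρj i = 0) ∧ (∀ i ∈ K, ρk i = 0) ∧ (∀ i ∈ L, ρl i = 0) := by
  let e : ι → ι → R := fun i => Pi.single i 1
  have he (i : ι) : 0 < e i := Pi.single_pos.2 one_pos
  let w : (ι ⊕ ι) ⊕ (ι ⊕ ι) → (ι → R) × (ι → R) :=
    Sum.elim (Sum.elim (fun i => (M i, e i)) (fun i => (M i, e i)))
      (Sum.elim (fun i => (0, e i)) (fun i => (0, e i)))
  have hw : PosLinearIndepOn R (fun k => (w k).2) ((G.disjSum H).disjSum (K.disjSum L)) :=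
    .of_pos <| by rintro ((i | i) | (i | i)) - <;> exact he i
  have hv : PosLinearIndepOn R (Sum.elim e e) (I.disjSum J) :=
    .of_pos <| by rintro (i | i) - <;> exact he i
  let c : ((ι ⊕ ι) ⊕ (ι ⊕ ι)) ⊕ (ι ⊕ ι) → R :=
    Sum.elim (Sum.elim (Sum.elim ρg ρh) (Sum.elim ρk ρl)) (Sum.elim ρi ρj)
  have hzero := hw.disjSum_of_snd hv c
    (by simpa [c, and_assoc] using ⟨hg, hh, hk, hl, hi, hj⟩)
    (by simpa [c, w, e, sum_disjSum, Prod.ext_iff, Prod.fst_sum, Prod.snd_sum, ← add_assoc]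
          using ⟨hsum1, hsum2⟩)
  simp only [c, Sum.forall, inl_mem_disjSum, inr_mem_disjSum, Sum.elim_inl, Sum.elim_inr] at hzero
  obtain ⟨⟨⟨hg₀, hh₀⟩, hk₀, hl₀⟩, hi₀, hj₀⟩ := hzero
  exact ⟨hg₀, hh₀, hi₀, hj₀, hk₀, hl₀⟩

/-- Lemma 4.3: with Q partitioned into Λ₁, Λ₂, Λ₃⁺, Λ₃ᶜ, Λ_u and M = BBᵀ, the
family of vectors in ℝ^Q × ℝ^Q consisting of (M_{i·}, e_i) for i ∈ Λ₃⁺ ∪ Λ₃ᶜ ∪ Λ_u,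
(M_{i·}, e_i) for i ∈ Λ₁, (e_i, 0) for i ∈ Λ₁, (e_i, 0) for i ∈ Λ₂, (0, e_i) for
i ∈ Λ₃ᶜ, and (0, e_i) for i ∈ Λ₁ ∪ Λ₂ ∪ Λ₃⁺, is positive-linearly independent.
The zero combination is stated via its two ℝ^Q components. -/
theorem lemma3_positive_linear_independence
    {ι : Type*} [Fintype ι] [DecidableEq ι]
    (Λ₁ Λ₂ Λ₃p Λ₃c Λu : Finset ι)
    (hdisj : List.Pairwise Disjoint [Λ₁, Λ₂, Λ₃p, Λ₃c, Λu])
    (hunion : Λ₁ ∪ Λ₂ ∪ Λ₃p ∪ Λ₃c ∪ Λu = Finset.univ)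
    (n : ℕ) (hn : 0 < n) (B : Matrix ι (Fin n) ℝ)
    (M : Matrix ι ι ℝ) (hM : M = B * Bᵀ)
    (ρg ρh ρi ρj ρm ρn : ι → ℝ)
    (hg : ∀ i ∈ Λ₃p ∪ Λ₃c ∪ Λu, 0 ≤ ρg i) (hh : ∀ i ∈ Λ₁, 0 ≤ ρh i)
    (hi : ∀ i ∈ Λ₁, 0 ≤ ρi i) (hj : ∀ i ∈ Λ₂, 0 ≤ ρj i)
    (hm : ∀ i ∈ Λ₃c, 0 ≤ ρm i) (hn' : ∀ i ∈ Λ₁ ∪ Λ₂ ∪ Λ₃p, 0 ≤ ρn i)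
    (hsum1 : (∑ i ∈ Λ₃p ∪ Λ₃c ∪ Λu, ρg i • (M i : ι → ℝ))
        + (∑ i ∈ Λ₁, ρh i • (M i : ι → ℝ))
        + (∑ i ∈ Λ₁, ρi i • (Pi.single i 1 : ι → ℝ))
        + (∑ i ∈ Λ₂, ρj i • (Pi.single i 1 : ι → ℝ)) = 0)
    (hsum2 : (∑ i ∈ Λ₃p ∪ Λ₃c ∪ Λu, ρg i • (Pi.single i 1 : ι → ℝ))
        + (∑ i ∈ Λ₁, ρh i • (Pi.single i 1 : ι → ℝ))
        + (∑ i ∈ Λ₃c, ρm i • (Pi.single i 1 : ι → ℝ))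
        + (∑ i ∈ Λ₁ ∪ Λ₂ ∪ Λ₃p, ρn i • (Pi.single i 1 : ι → ℝ)) = 0) :
    (∀ i ∈ Λ₃p ∪ Λ₃c ∪ Λu, ρg i = 0) ∧ (∀ i ∈ Λ₁, ρh i = 0) ∧
    (∀ i ∈ Λ₁, ρi i = 0) ∧ (∀ i ∈ Λ₂, ρj i = 0) ∧
    (∀ i ∈ Λ₃c, ρm i = 0) ∧ (∀ i ∈ Λ₁ ∪ Λ₂ ∪ Λ₃p, ρn i = 0) :=
  lemma3_positive_linear_independence_general hg hh hi hj hm hn' hsum1 hsum2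
end

section
/- Let A be a real p×n matrix, B a real q×n matrix, ζ, z ∈ ℝ^p and α ∈ ℝ^q, and set g = ABᵀα + z. Assume the feasibility conditions 0 ≤ ζ ⊥ g ≥ 0 and 0 ≤ z ⊥ 1 − ζ ≥ 0 hold, and assume the nondegeneracy condition that there is no index i with ζ_i = 1 and z_i = 0. Then the four sets Ψ₁⁰, Ψ₁⁺, Ψ₂, Ψ₃ are pairwise disjoint and their union is the whole index set {1, …, p}. -/
open Matrix

/-!
Complementarity forces `z` to vanish where `ζ ≠ 1` and `g` to vanish where `ζ ≠ 0`. So the position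
of `ζ i` in `[0, 1]` determines the set containing `i`, except that at `ζ i = 0` the sign of `g i`
decides and at `ζ i = 1` nondegeneracy gives `0 < z i`. The sets are disjoint because for any two of
them one of `ζ`, `g`, `z`, `1 - ζ` vanishes on one set and is positive on the other.
-/

/-- The scalar complementarity condition `0 ≤ a ⊥ b ≥ 0`. -/
def IsComplementary {R : Type*} [Mul R] [Zero R] [LE R] (a b : R) : Prop :=
  0 ≤ a ∧ 0 ≤ b ∧ a * b = 0

namespace IsComplementary

variable {R : Type*} [MulZeroClass R] [NoZeroDivisors R] [LE R] {a b : R}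

theorem left_eq_zero (h : IsComplementary a b) (hb : b ≠ 0) : a = 0 :=
  (mul_eq_zero.mp h.2.2).resolve_right hb

theorem right_eq_zero (h : IsComplementary a b) (ha : a ≠ 0) : b = 0 :=
  (mul_eq_zero.mp h.2.2).resolve_left ha

end IsComplementary

section PsiSets

variable {ι R : Type*}

/-- The index set `Ψ₁⁰`: `ζ` is at its lower bound and both `g` and `z` vanish. -/
def psiOneZero [Zero R] (ζ g z : ι → R) : Set ι := {i | ζ i = 0 ∧ g i = 0 ∧ z i = 0}

/-- The index set `Ψ₁⁺`: `ζ` is strictly between its bounds and both `g` and `z` vanish. -/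
def psiOnePos [Zero R] [One R] [LT R] (ζ g z : ι → R) : Set ι :=
  {i | (0 < ζ i ∧ ζ i < 1) ∧ g i = 0 ∧ z i = 0}

/-- The index set `Ψ₂`: `ζ` is at its lower bound, `g` is positive and `z` vanishes. -/
def psiTwo [Zero R] [LT R] (ζ g z : ι → R) : Set ι := {i | ζ i = 0 ∧ 0 < g i ∧ z i = 0}

/-- The index set `Ψ₃`: `ζ` is at its upper bound, `g` vanishes and `z` is positive. -/
def psiThree [Zero R] [One R] [LT R] (ζ g z : ι → R) : Set ι := {i | ζ i = 1 ∧ g i = 0 ∧ 0 < z i}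

theorem pairwise_disjoint_psi [Zero R] [One R] [Preorder R] (ζ g z : ι → R) :
    List.Pairwise Disjoint
      [psiOneZero ζ g z, psiOnePos ζ g z, psiTwo ζ g z, psiThree ζ g z] := by
  have zero_pos : Disjoint (psiOneZero ζ g z) (psiOnePos ζ g z) :=
    Set.disjoint_left.mpr fun _ ⟨hζ, _, _⟩ ⟨⟨hζ_pos, _⟩, _, _⟩ => hζ_pos.ne' hζ
  have zero_two : Disjoint (psiOneZero ζ g z) (psiTwo ζ g z) :=
    Set.disjoint_left.mpr fun _ ⟨_, hg, _⟩ ⟨_, hg_pos, _⟩ => hg_pos.ne' hg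
  have zero_three : Disjoint (psiOneZero ζ g z) (psiThree ζ g z) :=
    Set.disjoint_left.mpr fun _ ⟨_, _, hz⟩ ⟨_, _, hz_pos⟩ => hz_pos.ne' hz
  have pos_two : Disjoint (psiOnePos ζ g z) (psiTwo ζ g z) :=
    Set.disjoint_left.mpr fun _ ⟨⟨hζ_pos, _⟩, _, _⟩ ⟨hζ, _, _⟩ => hζ_pos.ne' hζ
  have pos_three : Disjoint (psiOnePos ζ g z) (psiThree ζ g z) :=
    Set.disjoint_left.mpr fun _ ⟨⟨_, hζ_lt⟩, _, _⟩ ⟨hζ, _, _⟩ => hζ_lt.ne hζ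
  have two_three : Disjoint (psiTwo ζ g z) (psiThree ζ g z) :=
    Set.disjoint_left.mpr fun _ ⟨_, hg_pos, _⟩ ⟨_, hg, _⟩ => hg_pos.ne' hg
  simp only [List.pairwise_cons, List.forall_mem_cons, List.not_mem_nil, false_imp_iff,
    implies_true, List.Pairwise.nil, and_true]
  exact ⟨⟨zero_pos, zero_two, zero_three⟩, ⟨pos_two, pos_three⟩, two_three⟩

theorem mem_psiOneZero_or_mem_psiTwo_of_eq_zero [Zero R] [PartialOrder R] {ζ g z : ι → R} {i : ι}
    (hg : 0 ≤ g i) (hz : z i = 0) (hζ : ζ i = 0) :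
    i ∈ psiOneZero ζ g z ∨ i ∈ psiTwo ζ g z :=
  hg.eq_or_lt.imp (fun hg_zero => ⟨hζ, hg_zero.symm, hz⟩) (fun hg_pos => ⟨hζ, hg_pos, hz⟩)

section MulZeroOneClass

variable [MulZeroOneClass R] [Preorder R] {ζ g z : ι → R} {i : ι}

theorem mem_psiOnePos_of_pos_of_lt_one [NoZeroDivisors R] (hζg : IsComplementary (ζ i) (g i))
    (hz : z i = 0) (hζ_pos : 0 < ζ i) (hζ_lt : ζ i < 1) : i ∈ psiOnePos ζ g z :=
  ⟨⟨hζ_pos, hζ_lt⟩, hζg.right_eq_zero hζ_pos.ne', hz⟩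

theorem mem_psiThree_of_eq_one (hζg : IsComplementary (ζ i) (g i)) (hz : 0 < z i)
    (hζ : ζ i = 1) : i ∈ psiThree ζ g z := by
  have hg : g i = 0 := by simpa only [hζ, one_mul] using hζg.2.2
  exact ⟨hζ, hg, hz⟩

end MulZeroOneClass

variable [Ring R] [PartialOrder R] [IsOrderedAddMonoid R] [NoZeroDivisors R] {ζ g z : ι → R}

theorem psi_union_eq_univ
    (hζg : ∀ i, IsComplementary (ζ i) (g i)) (hzζ : ∀ i, IsComplementary (z i) (1 - ζ i))
    (hnd : ∀ i, ζ i = 1 → z i ≠ 0) :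
    psiOneZero ζ g z ∪ psiOnePos ζ g z ∪ psiTwo ζ g z ∪ psiThree ζ g z = Set.univ := by
  refine Set.eq_univ_of_forall fun i => ?_
  obtain hζ_one | hζ_lt := (sub_nonneg.mp (hzζ i).2.1).eq_or_lt
  · have hz_pos : 0 < z i := (hzζ i).1.lt_of_ne' (hnd i hζ_one)
    exact Or.inr (mem_psiThree_of_eq_one (hζg i) hz_pos hζ_one)
  · have hz : z i = 0 := (hzζ i).left_eq_zero (sub_pos.mpr hζ_lt).ne'
    obtain hζ_zero | hζ_pos := (hζg i).1.eq_or_lt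
    · obtain h | h := mem_psiOneZero_or_mem_psiTwo_of_eq_zero (hζg i).2.1 hz hζ_zero.symm
      · exact Or.inl (Or.inl (Or.inl h))
      · exact Or.inl (Or.inr h)
    · exact Or.inl (Or.inl (Or.inr (mem_psiOnePos_of_pos_of_lt_one (hζg i) hz hζ_pos hζ_lt)))

theorem psi_sets_partition_general
    (hζg : ∀ i, IsComplementary (ζ i) (g i)) (hzζ : ∀ i, IsComplementary (z i) (1 - ζ i))
    (hnd : ∀ i, ζ i = 1 → z i ≠ 0) :
    List.Pairwise Disjoint
      [psiOneZero ζ g z, psiOnePos ζ g z, psiTwo ζ g z, psiThree ζ g z] ∧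
    psiOneZero ζ g z ∪ psiOnePos ζ g z ∪ psiTwo ζ g z ∪ psiThree ζ g z = Set.univ :=
  ⟨pairwise_disjoint_psi ζ g z, psi_union_eq_univ hζg hzζ hnd⟩

end PsiSets

/-- The sets Ψ₁⁰, Ψ₁⁺, Ψ₂, Ψ₃ arising from the upper-level complementarity
system are pairwise disjoint and partition the whole index set. -/
theorem psi_sets_partition
    (p q n : ℕ) (A : Matrix (Fin p) (Fin n) ℝ) (B : Matrix (Fin q) (Fin n) ℝ)
    (ζ z : Fin p → ℝ) (α : Fin q → ℝ)
    (g : Fin p → ℝ) (hg : g = (A * Bᵀ).mulVec α + z)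
    (hfeas1 : ∀ i, 0 ≤ ζ i ∧ 0 ≤ g i ∧ ζ i * g i = 0)
    (hfeas2 : ∀ i, 0 ≤ z i ∧ 0 ≤ 1 - ζ i ∧ z i * (1 - ζ i) = 0)
    (hnd : ¬ ∃ i, ζ i = 1 ∧ z i = 0) :
    List.Pairwise Disjoint
      ([{i | ζ i = 0 ∧ g i = 0 ∧ z i = 0},
        {i | (0 < ζ i ∧ ζ i < 1) ∧ g i = 0 ∧ z i = 0},
        {i | ζ i = 0 ∧ 0 < g i ∧ z i = 0},
        {i | ζ i = 1 ∧ g i = 0 ∧ 0 < z i}] : List (Set (Fin p))) ∧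
    ({i | ζ i = 0 ∧ g i = 0 ∧ z i = 0} ∪
      {i | (0 < ζ i ∧ ζ i < 1) ∧ g i = 0 ∧ z i = 0} ∪
      {i | ζ i = 0 ∧ 0 < g i ∧ z i = 0} ∪
      {i | ζ i = 1 ∧ g i = 0 ∧ 0 < z i}) = (Set.univ : Set (Fin p)) := by
  exact psi_sets_partition_general hfeas1 hfeas2 fun i hζ hz => hnd ⟨i, hζ, hz⟩
end
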